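/- arXiv:2306.17750 — 6 statements merged into one kernel-verified Lean document; each statement's English description precedes it below -/
import Mathlib

section
/- Let E be a finite-dimensional real inner product space, H : E → E → ℝ, and g : E → E → E be such that for all θ and w, g θ w is the gradient at w of the map w' ↦ H θ w'. Assume there is F_θ ≥ 0 such that ‖g θ₁ w − g θ₂ w‖ ≤ F_θ‖θ₁ − θ₂‖ for all θ₁, θ₂, w, and there is F_w > 0 such that ⟪g θ w₁ − g θ w₂, w₁ − w₂⟫ ≥ F_w‖w₁ − w₂‖² for all θ, w₁, w₂. Let θ* ∈ E satisfy g θ* θ* = 0. If a sequence (θᵗ)_{t∈ℕ} satisfies g θᵗ θᵗ⁺¹ = 0 for all t, then ‖θᵗ⁺¹ − θ*‖ ≤ (F_θ / F_w) ‖θᵗ − θ*‖ for all t ∈ ℕ. -/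
open Filter RealInnerProductSpace

section StronglyMonotone

variable {E : Type*} [SeminormedAddCommGroup E] [InnerProductSpace ℝ E]

/-- Strong monotonicity, with modulus `m`, of an operator on a real inner product space. For the
gradient of a differentiable function this is strong convexity of the function. -/
def StronglyMonotone (m : ℝ) (A : E → E) : Prop :=
  ∀ x y, m * ‖x - y‖ ^ 2 ≤ ⟪A x - A y, x - y⟫

namespace StronglyMonotone

variable {m : ℝ} {A : E → E}

theorem mul_norm_sub_le (hA : StronglyMonotone m A) (x y : E) :
    m * ‖x - y‖ ≤ ‖A x - A y‖ := by
  obtain h_zero | h_pos := (norm_nonneg (x - y)).eq_or_lt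
  · rw [← h_zero, mul_zero]
    exact norm_nonneg _
  · refine le_of_mul_le_mul_right ?_ h_pos
    calc m * ‖x - y‖ * ‖x - y‖ = m * ‖x - y‖ ^ 2 := by ring
      _ ≤ ⟪A x - A y, x - y⟫ := hA x y
      _ ≤ ‖A x - A y‖ * ‖x - y‖ := real_inner_le_norm _ _

theorem norm_sub_le_div_of_apply_eq (hA : StronglyMonotone m A) (hm : 0 < m) {B : E → E} {x y : E}
    (h : A x = B y) : ‖x - y‖ ≤ ‖A y - B y‖ / m := by
  rw [le_div_iff₀' hm, ← h, norm_sub_rev (A y)]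
  exact hA.mul_norm_sub_le x y

end StronglyMonotone

end StronglyMonotone

theorem stmt_2_general {E : Type*} [NormedAddCommGroup E] [InnerProductSpace ℝ E]
    [CompleteSpace E]
    (H : E → E → ℝ) (g : E → E → E)
    (_hgrad : ∀ θ w, HasGradientAt (H θ) (g θ w) w)
    (Fθ Fw : ℝ) (hFw : 0 < Fw)
    (hLipθ : ∀ θ₁ θ₂ w, ‖g θ₁ w - g θ₂ w‖ ≤ Fθ * ‖θ₁ - θ₂‖)
    (hmono : ∀ θ, StronglyMonotone Fw (g θ))
    (θstar : E) (hfix : g θstar θstar = 0)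
    (θ : ℕ → E) (hseq : ∀ t : ℕ, g (θ t) (θ (t + 1)) = 0) (t : ℕ) :
    ‖θ (t + 1) - θstar‖ ≤ (Fθ / Fw) * ‖θ t - θstar‖ :=
  calc ‖θ (t + 1) - θstar‖
      ≤ ‖g (θ t) θstar - g θstar θstar‖ / Fw :=
        (hmono (θ t)).norm_sub_le_div_of_apply_eq hFw ((hseq t).trans hfix.symm)
    _ ≤ Fθ * ‖θ t - θstar‖ / Fw := by
        gcongr
        exact hLipθ (θ t) θstar θstar
    _ = (Fθ / Fw) * ‖θ t - θstar‖ := (div_mul_eq_mul_div _ _ _).symm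

theorem stmt_2 {E : Type*} [NormedAddCommGroup E] [InnerProductSpace ℝ E]
    [FiniteDimensional ℝ E]
    (H : E → E → ℝ) (g : E → E → E)
    (hgrad : ∀ θ w, HasGradientAt (H θ) (g θ w) w)
    (Fθ Fw : ℝ) (hFθ : 0 ≤ Fθ) (hFw : 0 < Fw)
    (hLipθ : ∀ θ₁ θ₂ w, ‖g θ₁ w - g θ₂ w‖ ≤ Fθ * ‖θ₁ - θ₂‖)
    (hmono : ∀ θ w₁ w₂, ⟪g θ w₁ - g θ w₂, w₁ - w₂⟫ ≥ Fw * ‖w₁ - w₂‖ ^ 2)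
    (θstar : E) (hfix : g θstar θstar = 0)
    (θ : ℕ → E) (hseq : ∀ t : ℕ, g (θ t) (θ (t + 1)) = 0) :
    ∀ t : ℕ, ‖θ (t + 1) - θstar‖ ≤ (Fθ / Fw) * ‖θ t - θstar‖ :=
  stmt_2_general H g hgrad Fθ Fw hFw hLipθ hmono θstar hfix θ hseq
end

section
/- Let E be a finite-dimensional real inner product space, H : E → E → ℝ, and g : E → E → E be such that for all θ and w, g θ w is the gradient at w of the map w' ↦ H θ w'. Assume there is F_θ ≥ 0 such that ‖g θ₁ w − g θ₂ w‖ ≤ F_θ‖θ₁ − θ₂‖ for all θ₁, θ₂, w, and there is F_w > 0 such that ⟪g θ w₁ − g θ w₂, w₁ − w₂⟫ ≥ F_w‖w₁ − w₂‖² for all θ, w₁, w₂. Let θ* ∈ E satisfy g θ* θ* = 0, and let (θᵗ)_{t∈ℕ} satisfy g θᵗ θᵗ⁺¹ = 0 for all t. If F_θ < F_w, then θᵗ converges to θ* as t → ∞. -/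
open Filter RealInnerProductSpace

/-!
Strong monotonicity and Cauchy–Schwarz bound the distance from the zero `θᵗ⁺¹` of `g θᵗ` to `θ*` by
the residual: `F_w ‖θᵗ⁺¹ - θ*‖ ≤ ‖g θᵗ θ*‖`. Since `g θ* θ* = 0`, that residual is also the change
in `g · θ*` caused by moving the target from `θ*` to `θᵗ`, hence at most `F_θ ‖θᵗ - θ*‖`. So every
iteration contracts the distance to `θ*` by the factor `F_θ / F_w < 1`.
-/

theorem tendsto_of_dist_succ_le_mul {X : Type*} [PseudoMetricSpace X] {x : ℕ → X} {a : X} {r : ℝ}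
    (hr₀ : 0 ≤ r) (hr₁ : r < 1) (hx : ∀ n, dist (x (n + 1)) a ≤ r * dist (x n) a) :
    Tendsto x atTop (nhds a) := by
  have geometric_bound (n : ℕ) : dist (x n) a ≤ r ^ n * dist (x 0) a :=
    le_geom (u := fun n => dist (x n) a) hr₀ n fun k _ => hx k
  have bound_tendsto : Tendsto (fun n => r ^ n * dist (x 0) a) atTop (nhds 0) := by
    simpa only [zero_mul] using
      (tendsto_pow_atTop_nhds_zero_of_lt_one hr₀ hr₁).mul_const (dist (x 0) a)
  exact tendsto_iff_dist_tendsto_zero.2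
    (squeeze_zero (fun _ => dist_nonneg) geometric_bound bound_tendsto)

section InnerProductSpace

variable {E : Type*} [SeminormedAddCommGroup E] [InnerProductSpace ℝ E]

theorem mul_norm_le_norm_of_mul_norm_sq_le_inner {c : ℝ} {u v : E} (h : c * ‖v‖ ^ 2 ≤ ⟪u, v⟫) :
    c * ‖v‖ ≤ ‖u‖ := by
  rcases (norm_nonneg v).eq_or_lt with hv | hv
  · simp [← hv]
  · refine le_of_mul_le_mul_right ?_ hv
    calc c * ‖v‖ * ‖v‖ = c * ‖v‖ ^ 2 := by ring
      _ ≤ ⟪u, v⟫ := h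
      _ ≤ ‖u‖ * ‖v‖ := real_inner_le_norm u v

theorem mul_norm_sub_le_norm_apply_of_apply_eq_zero {A : E → E} {c : ℝ} {x y : E}
    (hA : c * ‖x - y‖ ^ 2 ≤ ⟪A x - A y, x - y⟫) (hx : A x = 0) : c * ‖x - y‖ ≤ ‖A y‖ := by
  simpa only [hx, zero_sub, norm_neg] using mul_norm_le_norm_of_mul_norm_sq_le_inner hA

theorem stmt_3_general {g : E → E → E} {Fθ Fw : ℝ} {θstar : E} {θ : ℕ → E} (hFθ : 0 ≤ Fθ)
    (hLipθ : ∀ η, ‖g η θstar - g θstar θstar‖ ≤ Fθ * ‖η - θstar‖)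
    (hmono : ∀ η w, Fw * ‖w - θstar‖ ^ 2 ≤ ⟪g η w - g η θstar, w - θstar⟫)
    (hfix : g θstar θstar = 0) (hseq : ∀ t, g (θ t) (θ (t + 1)) = 0) (hlt : Fθ < Fw) :
    Tendsto θ atTop (nhds θstar) := by
  have hFw : 0 < Fw := hFθ.trans_lt hlt
  have contraction (t : ℕ) : Fw * ‖θ (t + 1) - θstar‖ ≤ Fθ * ‖θ t - θstar‖ :=
    calc Fw * ‖θ (t + 1) - θstar‖
      _ ≤ ‖g (θ t) θstar‖ := mul_norm_sub_le_norm_apply_of_apply_eq_zero (hmono _ _) (hseq t)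
      _ = ‖g (θ t) θstar - g θstar θstar‖ := by rw [hfix, sub_zero]
      _ ≤ Fθ * ‖θ t - θstar‖ := hLipθ (θ t)
  refine tendsto_of_dist_succ_le_mul (div_nonneg hFθ hFw.le) ((div_lt_one hFw).2 hlt) fun t => ?_
  rw [dist_eq_norm, dist_eq_norm, div_mul_eq_mul_div, le_div_iff₀' hFw]
  exact contraction t

end InnerProductSpace

theorem stmt_3 {E : Type*} [NormedAddCommGroup E] [InnerProductSpace ℝ E]
    [FiniteDimensional ℝ E]
    (H : E → E → ℝ) (g : E → E → E)
    (hgrad : ∀ θ w, HasGradientAt (H θ) (g θ w) w)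
    (Fθ Fw : ℝ) (hFθ : 0 ≤ Fθ) (hFw : 0 < Fw)
    (hLipθ : ∀ θ₁ θ₂ w, ‖g θ₁ w - g θ₂ w‖ ≤ Fθ * ‖θ₁ - θ₂‖)
    (hmono : ∀ θ w₁ w₂, ⟪g θ w₁ - g θ w₂, w₁ - w₂⟫ ≥ Fw * ‖w₁ - w₂‖ ^ 2)
    (θstar : E) (hfix : g θstar θstar = 0)
    (θ : ℕ → E) (hseq : ∀ t : ℕ, g (θ t) (θ (t + 1)) = 0)
    (hlt : Fθ < Fw) :
    Tendsto θ atTop (nhds θstar) :=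
  stmt_3_general hFθ (fun η => hLipθ η θstar θstar) (fun η w => hmono η w θstar) hfix hseq hlt
end

section
/- Let E be a finite-dimensional real inner product space, H : E → E → ℝ, and g : E → E → E be such that for all θ and w, g θ w is the gradient at w of the map w' ↦ H θ w'. Assume: (i) there is F_θ ≥ 0 such that ‖g θ₁ w − g θ₂ w‖ ≤ F_θ‖θ₁ − θ₂‖ for all θ₁, θ₂, w; (ii) there is F_w > 0 such that H θ w₂ ≥ H θ w₁ + ⟪g θ w₁, w₂ − w₁⟫ + (F_w/2)‖w₂ − w₁‖² for all θ, w₁, w₂; (iii) there is L ≥ F_w, L > 0, such that ‖g θ w₁ − g θ w₂‖ ≤ L‖w₁ − w₂‖ and H θ w₂ ≤ H θ w₁ + ⟪g θ w₁, w₂ − w₁⟫ + (L/2)‖w₂ − w₁‖² for all θ, w₁, w₂. Let θ* satisfy g θ* θ* = 0, fix K ≥ 1, and define the sequence (θᵗ) by: wᵗ'⁰ = θᵗ, wᵗ'ᵏ⁺¹ = wᵗ'ᵏ − (1/L) g θᵗ wᵗ'ᵏ for 0 ≤ k ≤ K−1, and θᵗ⁺¹ = wᵗ'ᴷ. Then for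 every t ∈ ℕ, ‖θᵗ⁺¹ − θ*‖² ≤ σ_K² ‖θᵗ − θ*‖², where σ_K² = (1 − κ)ᴷ (1 − η²) + η², κ = F_w/L, and η = F_θ/F_w. -/
open Filter RealInnerProductSpace

/-!
Each inner step is a gradient step on `H θ`, whose minimizer is close to, but not equal to, `θ⋆`.
Smoothness at the current point and strong convexity towards `u = θ⋆` bound `‖y - u‖²` after one
step by `(1 - κ) ‖x - u‖²` plus a multiple of the gap `H θ u - H θ y`. Strong convexity bounds this
gap by `‖∇H θ u‖² / (2 F_w)`, and `‖∇H θ u‖ ≤ F_θ ‖θ - u‖` because the gradient vanishes at the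
fixed point. So one step replaces the squared distance by at most a convex combination, with
weights `1 - κ` and `κ`, of itself and `η² ‖θ - u‖²`; after `K` steps the weights are `(1 - κ)ᴷ`
and `1 - (1 - κ)ᴷ`.
-/

theorem le_pow_mul_add_of_le_mul_add {R : Type*} [CommRing R] [PartialOrder R] [IsOrderedRing R]
    {a : ℕ → R} {b c : R} (hc : 0 ≤ c) (h : ∀ k, a (k + 1) ≤ c * a k + (1 - c) * b) (n : ℕ) :
    a n ≤ c ^ n * a 0 + (1 - c ^ n) * b := by
  induction n with
  | zero => simp
  | succ n ih =>
    calc a (n + 1) ≤ c * a n + (1 - c) * b := h n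
      _ ≤ c * (c ^ n * a 0 + (1 - c ^ n) * b) + (1 - c) * b := by gcongr
      _ = c ^ (n + 1) * a 0 + (1 - c ^ (n + 1)) * b := by ring

theorem eq_iterate_of_forall_lt {X : Type*} {F : X → X} {x : ℕ → X} {n : ℕ}
    (h : ∀ k < n, x (k + 1) = F (x k)) : x n = F^[n] (x 0) := by
  induction n with
  | zero => rfl
  | succ n ih =>
    rw [h n n.lt_succ_self, ih fun k hk => h k (hk.trans n.lt_succ_self),
      Function.iterate_succ_apply']

section GradientDescent

variable {E : Type*} [NormedAddCommGroup E] [InnerProductSpace ℝ E]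

/-- First-order form of strong convexity with modulus `m`: at every point, `f` lies above the
quadratic with slope `f'` and curvature `m`. -/
def QuadraticLowerBound (m : ℝ) (f : E → ℝ) (f' : E → E) : Prop :=
  ∀ x y, f x + ⟪f' x, y - x⟫ + m / 2 * ‖y - x‖ ^ 2 ≤ f y

/-- First-order form of `L`-smoothness (the conclusion of the descent lemma): at every point, `f`
lies below the quadratic with slope `f'` and curvature `L`. -/
def QuadraticUpperBound (L : ℝ) (f : E → ℝ) (f' : E → E) : Prop :=
  ∀ x y, f y ≤ f x + ⟪f' x, y - x⟫ + L / 2 * ‖y - x‖ ^ 2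

/-- One gradient-descent step with step size `α` along the vector field `f'`. -/
def gradientStep (α : ℝ) (f' : E → E) (x : E) : E :=
  x - α • f' x

variable {f : E → ℝ} {f' : E → E} {m L : ℝ}

theorem QuadraticLowerBound.sub_le_norm_sq_div (hlow : QuadraticLowerBound m f f') (hm : 0 < m)
    (u y : E) : f u - f y ≤ ‖f' u‖ ^ 2 / (2 * m) := by
  have cauchy_schwarz : -(‖f' u‖ * ‖y - u‖) ≤ ⟪f' u, y - u⟫ :=
    neg_le_of_abs_le (abs_real_inner_le_norm _ _)
  have young : ‖f' u‖ * ‖y - u‖ - m / 2 * ‖y - u‖ ^ 2 ≤ ‖f' u‖ ^ 2 / (2 * m) := by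
    rw [le_div_iff₀ (by positivity)]
    linear_combination sq_nonneg (‖f' u‖ - m * ‖y - u‖)
  linarith [hlow u y]

theorem inner_gradientStep_sub (hL : L ≠ 0) (f' : E → E) (x u : E) :
    ⟪f' x, gradientStep (1 / L) f' x - u⟫ =
      L / 2 * (‖x - u‖ ^ 2 - ‖gradientStep (1 / L) f' x - x‖ ^ 2 -
        ‖gradientStep (1 / L) f' x - u‖ ^ 2) := by
  set y := gradientStep (1 / L) f' x with hy
  have slope : f' x = L • (x - y) := by
    rw [hy, gradientStep, sub_sub_cancel, smul_smul, mul_one_div_cancel hL, one_smul]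
  have polarization := norm_add_sq_real (x - y) (y - u)
  rw [sub_add_sub_cancel] at polarization
  rw [slope, real_inner_smul_left, polarization, norm_sub_rev y x]
  ring

theorem apply_gradientStep_add_le (hlow : QuadraticLowerBound m f f')
    (hup : QuadraticUpperBound L f f') (hL : L ≠ 0) (x u : E) :
    f (gradientStep (1 / L) f' x) + L / 2 * ‖gradientStep (1 / L) f' x - u‖ ^ 2 ≤
      f u + (L - m) / 2 * ‖x - u‖ ^ 2 := by
  have three_point := inner_gradientStep_sub hL f' x u
  set y := gradientStep (1 / L) f' x
  have upper := hup x y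
  have lower := hlow x u
  rw [norm_sub_rev u x] at lower
  have split : ⟪f' x, y - u⟫ = ⟪f' x, y - x⟫ - ⟪f' x, u - x⟫ := by
    rw [← inner_sub_right, sub_sub_sub_cancel_right]
  linarith

theorem norm_gradientStep_sub_sq_le (hlow : QuadraticLowerBound m f f')
    (hup : QuadraticUpperBound L f f') (hm : 0 < m) (hL : 0 < L) (x u : E) :
    ‖gradientStep (1 / L) f' x - u‖ ^ 2 ≤
      (1 - m / L) * ‖x - u‖ ^ 2 + m / L * (‖f' u‖ / m) ^ 2 := by
  have decrease := apply_gradientStep_add_le hlow hup hL.ne' x u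
  set y := gradientStep (1 / L) f' x
  have gap := hlow.sub_le_norm_sq_div hm u y
  calc ‖y - u‖ ^ 2 = 2 / L * (L / 2 * ‖y - u‖ ^ 2) := by field_simp
    _ ≤ 2 / L * ((L - m) / 2 * ‖x - u‖ ^ 2 + ‖f' u‖ ^ 2 / (2 * m)) := by
      gcongr
      linarith
    _ = (1 - m / L) * ‖x - u‖ ^ 2 + m / L * (‖f' u‖ / m) ^ 2 := by field_simp

theorem norm_iterate_gradientStep_sub_sq_le (hlow : QuadraticLowerBound m f f')
    (hup : QuadraticUpperBound L f f') (hm : 0 < m) (hmL : m ≤ L) (x u : E) (n : ℕ) :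
    ‖(gradientStep (1 / L) f')^[n] x - u‖ ^ 2 ≤
      (1 - m / L) ^ n * ‖x - u‖ ^ 2 + (1 - (1 - m / L) ^ n) * (‖f' u‖ / m) ^ 2 := by
  have hL : 0 < L := hm.trans_le hmL
  refine le_pow_mul_add_of_le_mul_add (a := fun k => ‖(gradientStep (1 / L) f')^[k] x - u‖ ^ 2)
    (sub_nonneg.2 ((div_le_one hL).2 hmL)) (fun k => ?_) n
  rw [Function.iterate_succ_apply', sub_sub_cancel]
  exact norm_gradientStep_sub_sq_le hlow hup hm hL _ u

end GradientDescent

theorem stmt_4_general {E : Type*} [NormedAddCommGroup E] [InnerProductSpace ℝ E]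
    {H : E → E → ℝ} {g : E → E → E}
    (_hgrad : ∀ θ w, HasFDerivAt (H θ) (innerSL ℝ (g θ w)) w)
    {Fθ Fw L : ℝ} (hFw : 0 < Fw) (hFwL : Fw ≤ L) {θstar : E}
    (hLipθ : ∀ θ, ‖g θ θstar - g θstar θstar‖ ≤ Fθ * ‖θ - θstar‖)
    (hsc : ∀ θ, QuadraticLowerBound Fw (H θ) (g θ))
    (hsm : ∀ θ, QuadraticUpperBound L (H θ) (g θ))
    (hfix : g θstar θstar = 0) (K : ℕ) (θ : E) :
    ‖(gradientStep (1 / L) (g θ))^[K] θ - θstar‖ ^ 2 ≤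
      ((1 - Fw / L) ^ K * (1 - (Fθ / Fw) ^ 2) + (Fθ / Fw) ^ 2) * ‖θ - θstar‖ ^ 2 := by
  have hL : 0 < L := hFw.trans_le hFwL
  have contraction_le_one : (1 - Fw / L) ^ K ≤ 1 :=
    pow_le_one₀ (sub_nonneg.2 ((div_le_one hL).2 hFwL)) (sub_le_self _ (by positivity))
  have grad_le : ‖g θ θstar‖ ≤ Fθ * ‖θ - θstar‖ := by
    simpa only [hfix, sub_zero] using hLipθ θ
  calc ‖(gradientStep (1 / L) (g θ))^[K] θ - θstar‖ ^ 2
      ≤ (1 - Fw / L) ^ K * ‖θ - θstar‖ ^ 2 +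
          (1 - (1 - Fw / L) ^ K) * (‖g θ θstar‖ / Fw) ^ 2 :=
        norm_iterate_gradientStep_sub_sq_le (hsc θ) (hsm θ) hFw hFwL θ θstar K
    _ ≤ (1 - Fw / L) ^ K * ‖θ - θstar‖ ^ 2 +
          (1 - (1 - Fw / L) ^ K) * (Fθ * ‖θ - θstar‖ / Fw) ^ 2 := by
        have := sub_nonneg.2 contraction_le_one
        gcongr
    _ = ((1 - Fw / L) ^ K * (1 - (Fθ / Fw) ^ 2) + (Fθ / Fw) ^ 2) * ‖θ - θstar‖ ^ 2 := by ring

theorem stmt_4 {E : Type*} [NormedAddCommGroup E] [InnerProductSpace ℝ E]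
    [FiniteDimensional ℝ E]
    (H : E → E → ℝ) (g : E → E → E)
    (hgrad : ∀ θ w, HasGradientAt (H θ) (g θ w) w)
    (Fθ Fw L : ℝ) (hFθ : 0 ≤ Fθ) (hFw : 0 < Fw) (hL : 0 < L) (hFwL : Fw ≤ L)
    (hLipθ : ∀ θ₁ θ₂ w, ‖g θ₁ w - g θ₂ w‖ ≤ Fθ * ‖θ₁ - θ₂‖)
    (hsc : ∀ θ w₁ w₂, H θ w₁ + ⟪g θ w₁, w₂ - w₁⟫ + Fw / 2 * ‖w₂ - w₁‖ ^ 2 ≤ H θ w₂)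
    (hLipw : ∀ θ w₁ w₂, ‖g θ w₁ - g θ w₂‖ ≤ L * ‖w₁ - w₂‖)
    (hsm : ∀ θ w₁ w₂, H θ w₂ ≤ H θ w₁ + ⟪g θ w₁, w₂ - w₁⟫ + L / 2 * ‖w₂ - w₁‖ ^ 2)
    (θstar : E) (hfix : g θstar θstar = 0)
    (K : ℕ) (hK : 1 ≤ K)
    (θ : ℕ → E) (w : ℕ → ℕ → E)
    (hw0 : ∀ t, w t 0 = θ t)
    (hwk : ∀ t k, k < K → w t (k + 1) = w t k - (1 / L) • g (θ t) (w t k))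
    (hθ : ∀ t, θ (t + 1) = w t K) :
    ∀ t : ℕ,
      ‖θ (t + 1) - θstar‖ ^ 2 ≤
        ((1 - Fw / L) ^ K * (1 - (Fθ / Fw) ^ 2) + (Fθ / Fw) ^ 2) * ‖θ t - θstar‖ ^ 2 := by
  intro t
  rw [hθ, eq_iterate_of_forall_lt (F := gradientStep (1 / L) (g (θ t))) (hwk t), hw0]
  exact stmt_4_general (fun θ w => (hgrad θ w).hasFDerivAt) hFw hFwL
    (fun θ => hLipθ θ θstar θstar) hsc hsm hfix K (θ t)
end

section
/- Let E be a finite-dimensional real inner product space, H : E → E → ℝ, and g : E → E → E be such that for all θ and w, g θ w is the gradient at w of the map w' ↦ H θ w'. Assume: (i) there is F_θ ≥ 0 such that ‖g θ₁ w − g θ₂ w‖ ≤ F_θ‖θ₁ − θ₂‖ for all θ₁, θ₂, w; (ii) there is F_w > 0 such that H θ w₂ ≥ H θ w₁ + ⟪g θ w₁, w₂ − w₁⟫ + (F_w/2)‖w₂ − w₁‖² for all θ, w₁, w₂; (iii) there is L ≥ F_w, L > 0, such that ‖g θ w₁ − g θ w₂‖ ≤ L‖w₁ − w₂‖ and H θ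 w₂ ≤ H θ w₁ + ⟪g θ w₁, w₂ − w₁⟫ + (L/2)‖w₂ − w₁‖² for all θ, w₁, w₂. Let θ* satisfy g θ* θ* = 0, fix K ≥ 1, and define (θᵗ) by: wᵗ'⁰ = θᵗ, wᵗ'ᵏ⁺¹ = wᵗ'ᵏ − (1/L) g θᵗ wᵗ'ᵏ for 0 ≤ k ≤ K−1, and θᵗ⁺¹ = wᵗ'ᴷ. If F_θ < F_w, then θᵗ converges to θ* as t → ∞. -/
open Filter RealInnerProductSpace

/-!
A quadratic upper bound of curvature `L` and lower bound of curvature `m` on `f` become, for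
`½‖·‖² - α f`, bounds of curvatures `1 - α L` and `1 - α m`. The gradient of this function is
`x ↦ x - α ∇f x`, so for `α L ≤ 1` the gradient step is the gradient of a convex
`(1 - α m)`-smooth function and hence contracts distances by `1 - α m`. At the TD fixed point `p`
the inner gradient need not vanish, but its norm is at most `F ‖u - p‖` for the current target `u`.
Each inner step therefore satisfies `‖w' - p‖ ≤ (1 - α m) ‖w - p‖ + α F ‖u - p‖`; since `F < m`,
inner iterates never leave the ball of radius `‖u - p‖`, and even one step brings the distance
to `p` down to at most `(1 - α (m - F)) ‖u - p‖`.
-/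

section Recursion

theorem eq_iterate_of_succ_eq {X : Type*} {f : X → X} {u : ℕ → X} {x : X} {n : ℕ}
    (h_zero : u 0 = x) (h_succ : ∀ k < n, u (k + 1) = f (u k)) : u n = f^[n] x := by
  induction n with
  | zero => exact h_zero
  | succ n ih =>
    rw [h_succ n n.lt_succ_self, ih fun k hk => h_succ k (hk.trans n.lt_succ_self),
      Function.iterate_succ_apply']

variable {X : Type*} [PseudoMetricSpace X]

theorem dist_iterate_le_of_dist_le_add {f : X → X} {x p : X} {a b : ℝ}
    (ha : 0 ≤ a) (hab : a + b ≤ 1) (hf : ∀ y, dist (f y) p ≤ a * dist y p + b * dist x p)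
    {n : ℕ} (hn : 1 ≤ n) : dist (f^[n] x) p ≤ (a + b) * dist x p := by
  induction n, hn using Nat.le_induction with
  | base => simpa only [Function.iterate_one, add_mul] using hf x
  | succ n _ ih =>
    have h_ball : dist (f^[n] x) p ≤ dist x p :=
      ih.trans (mul_le_of_le_one_left dist_nonneg hab)
    calc dist (f^[n + 1] x) p
        ≤ a * dist (f^[n] x) p + b * dist x p := by
          rw [Function.iterate_succ_apply']; exact hf _
      _ ≤ a * dist x p + b * dist x p := by gcongr
      _ = (a + b) * dist x p := by ring

theorem tendsto_of_dist_succ_le_mul_s5 {u : ℕ → X} {p : X} {c : ℝ} (hc₀ : 0 ≤ c) (hc₁ : c < 1)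
    (hu : ∀ n, dist (u (n + 1)) p ≤ c * dist (u n) p) : Tendsto u atTop (nhds p) := by
  have h_geom (n : ℕ) : dist (u n) p ≤ c ^ n * dist (u 0) p :=
    le_geom (u := fun k => dist (u k) p) hc₀ n fun k _ => hu k
  refine tendsto_iff_dist_tendsto_zero.2 (squeeze_zero (fun _ => dist_nonneg) h_geom ?_)
  simpa only [zero_mul] using
    (tendsto_pow_atTop_nhds_zero_of_lt_one hc₀ hc₁).mul_const (dist (u 0) p)

end Recursion

section TemporalDifference

variable {E : Type*} [NormedAddCommGroup E] [InnerProductSpace ℝ E]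

/-- First-order form of "`f` is `m`-strongly convex and `L`-smooth with gradient `f'`". No sign is
imposed on the curvatures `m` and `L`. That `f'` is the gradient of `f` follows from the two
bounds and is not a separate field. -/
structure HasQuadraticBounds (f : E → ℝ) (f' : E → E) (m L : ℝ) : Prop where
  lower : ∀ x y, f x + ⟪f' x, y - x⟫ + m / 2 * ‖y - x‖ ^ 2 ≤ f y
  upper : ∀ x y, f y ≤ f x + ⟪f' x, y - x⟫ + L / 2 * ‖y - x‖ ^ 2

/-- One gradient-descent step of size `α` along the gradient field `f'`. -/
def gradStep (f' : E → E) (α : ℝ) (x : E) : E := x - α • f' x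

/-- One outer iteration of TD learning: `K` gradient steps of size `α` on the objective with
gradient `g u`, started at the target parameter `u` itself. -/
def tdUpdate (g : E → E → E) (α : ℝ) (K : ℕ) (u : E) : E := (gradStep (g u) α)^[K] u

namespace HasQuadraticBounds

variable {f : E → ℝ} {f' : E → E} {m L α : ℝ}

-- Compare the bounds based at `x` and at `y` in the two points `y - e` and `x + e`.
theorem two_mul_inner_sub_le (h : HasQuadraticBounds f f' m L) (hm : 0 ≤ m) (x y e : E) :
    2 * ⟪f' y - f' x, e⟫ ≤ ⟪f' y - f' x, y - x⟫ + L * ‖e‖ ^ 2 := by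
  have convex (a b : E) : f a + ⟪f' a, b - a⟫ ≤ f b :=
    (le_add_of_nonneg_right (by positivity)).trans (h.lower a b)
  have at_y_sub : f x + ⟪f' x, y - x - e⟫ ≤ f y - ⟪f' y, e⟫ + L / 2 * ‖e‖ ^ 2 := by
    simpa only [sub_right_comm y e x, sub_sub_cancel_left, inner_neg_right, norm_neg,
      ← sub_eq_add_neg] using (convex x (y - e)).trans (h.upper y (y - e))
  have at_x_add : f y + ⟪f' y, e - (y - x)⟫ ≤ f x + ⟪f' x, e⟫ + L / 2 * ‖e‖ ^ 2 := by
    have h_eq : x + e - y = e - (y - x) := by abel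
    simpa only [h_eq, add_sub_cancel_left] using (convex y (x + e)).trans (h.upper x (x + e))
  rw [inner_sub_right] at at_y_sub at_x_add
  rw [inner_sub_left, inner_sub_left]
  linarith

theorem dist_le_mul_dist (h : HasQuadraticBounds f f' m L) (hm : 0 ≤ m) (hL : 0 ≤ L) (x y : E) :
    dist (f' x) (f' y) ≤ L * dist x y := by
  rcases eq_or_ne (f' x) (f' y) with h_eq | h_ne
  · rw [h_eq, dist_self]; positivity
  have hv : 0 < ‖x - y‖ := norm_sub_pos_iff.2 fun hxy => h_ne (congrArg f' hxy)
  have hd : ‖f' x - f' y‖ ≠ 0 := (norm_sub_pos_iff.2 h_ne).ne'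
  rw [dist_eq_norm, dist_eq_norm]
  -- The length `‖x - y‖`, unlike the usual `‖f' x - f' y‖ / L`, also works for `L = 0`.
  let e : E := (‖x - y‖ / ‖f' x - f' y‖) • (f' x - f' y)
  have norm_e : ‖e‖ = ‖x - y‖ := by
    rw [norm_smul, Real.norm_of_nonneg (by positivity), div_mul_cancel₀ _ hd]
  have inner_e : ⟪f' x - f' y, e⟫ = ‖f' x - f' y‖ * ‖x - y‖ := by
    rw [real_inner_smul_right, real_inner_self_eq_norm_sq]
    field_simp
  have h_inner := h.two_mul_inner_sub_le hm y x e
  rw [inner_e, norm_e] at h_inner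
  have h_cauchy_schwarz := real_inner_le_norm (f' x - f' y) (x - y)
  refine le_of_mul_le_mul_right ?_ hv
  linarith

theorem half_norm_sq_sub_mul (h : HasQuadraticBounds f f' m L) (hα : 0 ≤ α) :
    HasQuadraticBounds (fun x => 1 / 2 * ‖x‖ ^ 2 - α * f x) (gradStep f' α)
      (1 - α * L) (1 - α * m) := by
  have norm_sq_expand (x y : E) : ‖y‖ ^ 2 = ‖x‖ ^ 2 + 2 * ⟪x, y - x⟫ + ‖y - x‖ ^ 2 := by
    simpa only [add_sub_cancel] using norm_add_sq_real x (y - x)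
  constructor <;> intro x y <;>
    simp only [gradStep, inner_sub_left, real_inner_smul_left, norm_sq_expand x y]
  · linarith [mul_le_mul_of_nonneg_left (h.upper x y) hα]
  · linarith [mul_le_mul_of_nonneg_left (h.lower x y) hα]

theorem dist_gradStep_le (h : HasQuadraticBounds f f' m L) (hα : 0 ≤ α) (hαm : α * m ≤ 1)
    (hαL : α * L ≤ 1) (x y : E) :
    dist (gradStep f' α x) (gradStep f' α y) ≤ (1 - α * m) * dist x y :=
  (h.half_norm_sq_sub_mul hα).dist_le_mul_dist (sub_nonneg.2 hαL) (sub_nonneg.2 hαm) x y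

theorem dist_gradStep_le_add (h : HasQuadraticBounds f f' m L) (hα : 0 ≤ α) (hαm : α * m ≤ 1)
    (hαL : α * L ≤ 1) (x p : E) :
    dist (gradStep f' α x) p ≤ (1 - α * m) * dist x p + α * ‖f' p‖ := by
  have drift : dist (gradStep f' α p) p = α * ‖f' p‖ := by
    rw [gradStep, dist_self_sub_left, norm_smul, Real.norm_of_nonneg hα]
  calc dist (gradStep f' α x) p
      ≤ dist (gradStep f' α x) (gradStep f' α p) + dist (gradStep f' α p) p :=
        dist_triangle _ _ _
    _ ≤ (1 - α * m) * dist x p + α * ‖f' p‖ :=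
        add_le_add (h.dist_gradStep_le hα hαm hαL x p) drift.le

end HasQuadraticBounds

theorem dist_tdUpdate_le {f : E → ℝ} {g : E → E → E} {u p : E} {m L F α : ℝ} {K : ℕ}
    (h : HasQuadraticBounds f (g u) m L) (hα : 0 ≤ α) (hαm : α * m ≤ 1) (hαL : α * L ≤ 1)
    (hFm : F ≤ m) (hp : ‖g u p‖ ≤ F * dist u p) (hK : 1 ≤ K) :
    dist (tdUpdate g α K u) p ≤ (1 - α * m + α * F) * dist u p := by
  have factor_le_one : 1 - α * m + α * F ≤ 1 := by
    linarith [mul_le_mul_of_nonneg_left hFm hα]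
  refine dist_iterate_le_of_dist_le_add (sub_nonneg.2 hαm) factor_le_one (fun x => ?_) hK
  calc dist (gradStep (g u) α x) p
      ≤ (1 - α * m) * dist x p + α * ‖g u p‖ := h.dist_gradStep_le_add hα hαm hαL x p
    _ ≤ (1 - α * m) * dist x p + α * (F * dist u p) := by gcongr
    _ = (1 - α * m) * dist x p + α * F * dist u p := by rw [mul_assoc]

theorem stmt_5_general {H : E → E → ℝ} {g : E → E → E}
    (hgrad : ∀ u x, HasFDerivAt (H u) (innerSL ℝ (g u x)) x)
    {F m L α : ℝ} (hF : 0 ≤ F) (hFm : F < m) (hmL : m ≤ L) (hα : 0 < α) (hαL : α * L ≤ 1)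
    (hH : ∀ u, HasQuadraticBounds (H u) (g u) m L)
    {p : E} (hp : ∀ u, ‖g u p‖ ≤ F * dist u p) {K : ℕ} (hK : 1 ≤ K)
    {θ : ℕ → E} (hθ : ∀ t, θ (t + 1) = tdUpdate g α K (θ t)) :
    Tendsto θ atTop (nhds p) := by
  have hαm : α * m ≤ 1 := (mul_le_mul_of_nonneg_left hmL hα.le).trans hαL
  have factor_nonneg : 0 ≤ 1 - α * m + α * F :=
    add_nonneg (sub_nonneg.2 hαm) (mul_nonneg hα.le hF)
  have factor_lt_one : 1 - α * m + α * F < 1 := by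
    linarith [mul_lt_mul_of_pos_left hFm hα]
  refine tendsto_of_dist_succ_le_mul_s5 factor_nonneg factor_lt_one fun t => ?_
  rw [hθ t]
  exact dist_tdUpdate_le (hH (θ t)) hα.le hαm hαL hFm.le (hp (θ t)) hK

end TemporalDifference

theorem stmt_5 {E : Type*} [NormedAddCommGroup E] [InnerProductSpace ℝ E]
    [FiniteDimensional ℝ E]
    (H : E → E → ℝ) (g : E → E → E)
    (hgrad : ∀ θ w, HasGradientAt (H θ) (g θ w) w)
    (Fθ Fw L : ℝ) (hFθ : 0 ≤ Fθ) (hFw : 0 < Fw) (hL : 0 < L) (hFwL : Fw ≤ L)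
    (hLipθ : ∀ θ₁ θ₂ w, ‖g θ₁ w - g θ₂ w‖ ≤ Fθ * ‖θ₁ - θ₂‖)
    (hsc : ∀ θ w₁ w₂, H θ w₁ + ⟪g θ w₁, w₂ - w₁⟫ + Fw / 2 * ‖w₂ - w₁‖ ^ 2 ≤ H θ w₂)
    (hLipw : ∀ θ w₁ w₂, ‖g θ w₁ - g θ w₂‖ ≤ L * ‖w₁ - w₂‖)
    (hsm : ∀ θ w₁ w₂, H θ w₂ ≤ H θ w₁ + ⟪g θ w₁, w₂ - w₁⟫ + L / 2 * ‖w₂ - w₁‖ ^ 2)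
    (θstar : E) (hfix : g θstar θstar = 0)
    (K : ℕ) (hK : 1 ≤ K)
    (θ : ℕ → E) (w : ℕ → ℕ → E)
    (hw0 : ∀ t, w t 0 = θ t)
    (hwk : ∀ t k, k < K → w t (k + 1) = w t k - (1 / L) • g (θ t) (w t k))
    (hθ : ∀ t, θ (t + 1) = w t K)
    (hlt : Fθ < Fw) :
    Tendsto θ atTop (nhds θstar) :=
  stmt_5_general (fun u x => (hgrad u x).hasFDerivAt) hFθ hlt hFwL (one_div_pos.2 hL)
    (one_div_mul_cancel hL.ne').le (fun u => ⟨hsc u, hsm u⟩)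
    (fun u => by simpa only [hfix, sub_zero, dist_eq_norm] using hLipθ u θstar θstar) hK
    (fun t => (hθ t).trans (eq_iterate_of_succ_eq (hw0 t) (hwk t)))
end

section
/- Let E be a finite-dimensional real inner product space, H : E → E → ℝ, and g : E → E → E be such that for all θ and w, g θ w is the gradient at w of the map w' ↦ H θ w'. Assume: (i) there is F_θ ≥ 0 such that ‖g θ₁ w − g θ₂ w‖ ≤ F_θ‖θ₁ − θ₂‖ for all θ₁, θ₂, w; (ii) there is F_w > 0 such that H θ w₂ ≥ H θ w₁ + ⟪g θ w₁, w₂ − w₁⟫ + (F_w/2)‖w₂ − w₁‖² for all θ, w₁, w₂; (iii) there is L > 0 such that H θ w₂ ≤ H θ w₁ + ⟪g θ w₁, w₂ − w₁⟫ + (L/2)‖w₂ − w₁‖² for all θ, w₁, w₂. Let θ* satisfy g θ* θ* = 0, let α > 0, and let θ, w ∈ E with w' = w − α · g θ w. Then H θ θ* − H θ w ≤ (F_θ² / (2 F_w)) ‖θ − θ*‖² − (1/α − L/2) ‖w' − w‖². -/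
open RealInnerProductSpace

/-!
Split `H θ θstar - H θ w` at the new iterate `w'`. Smoothness along the gradient step from `w` to
`w'` bounds `H θ w' - H θ w` by `-(1 / α - L / 2) * ‖w' - w‖ ^ 2`. Strong convexity at `θstar`,
minimized over the displacement, bounds `H θ θstar - H θ w'` by `‖g θ θstar‖ ^ 2 / (2 * Fw)`; since
`g θstar θstar = 0`, the Lipschitz dependence on the target gives `‖g θ θstar‖ ≤ Fθ * ‖θ - θstar‖`.
-/

section QuadraticBounds

variable {E : Type*} [NormedAddCommGroup E] [InnerProductSpace ℝ E]

lemma neg_norm_sq_div_le_inner_add_norm_sq {m : ℝ} (hm : 0 < m) (v x : E) :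
    -(‖v‖ ^ 2 / (2 * m)) ≤ ⟪v, x⟫ + m / 2 * ‖x‖ ^ 2 := by
  have complete_square : ⟪v, x⟫ + m / 2 * ‖x‖ ^ 2 + ‖v‖ ^ 2 / (2 * m) =
      ‖v + m • x‖ ^ 2 / (2 * m) := by
    rw [norm_add_sq_real, real_inner_smul_right, norm_smul, mul_pow, Real.norm_eq_abs, sq_abs]
    field_simp
    ring
  have square_nonneg : 0 ≤ ‖v + m • x‖ ^ 2 / (2 * m) := by positivity
  linarith

lemma sub_le_norm_sq_div_of_quadratic_lower_bound {f : E → ℝ} {m : ℝ} (hm : 0 < m) {v x y : E}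
    (hlower : f x + ⟪v, y - x⟫ + m / 2 * ‖y - x‖ ^ 2 ≤ f y) :
    f x - f y ≤ ‖v‖ ^ 2 / (2 * m) := by
  linarith [neg_norm_sq_div_le_inner_add_norm_sq hm v (y - x)]

lemma inner_gradient_step {α : ℝ} (hα : α ≠ 0) {v x y : E} (hstep : y = x - α • v) :
    ⟪v, y - x⟫ = -(1 / α) * ‖y - x‖ ^ 2 := by
  have gradient_eq : v = -(1 / α) • (y - x) := by
    rw [hstep, sub_sub_cancel_left, smul_neg, neg_smul, neg_neg, smul_smul, one_div_mul_cancel hα,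
      one_smul]
  calc ⟪v, y - x⟫ = ⟪-(1 / α) • (y - x), y - x⟫ := by rw [← gradient_eq]
    _ = -(1 / α) * ‖y - x‖ ^ 2 := by rw [real_inner_smul_left, real_inner_self_eq_norm_sq]

lemma gradient_step_sub_le_of_quadratic_upper_bound {f : E → ℝ} {L α : ℝ} (hα : α ≠ 0)
    {v x y : E} (hstep : y = x - α • v)
    (hupper : f y ≤ f x + ⟪v, y - x⟫ + L / 2 * ‖y - x‖ ^ 2) :
    f y - f x ≤ -((1 / α - L / 2) * ‖y - x‖ ^ 2) := by
  rw [inner_gradient_step hα hstep] at hupper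
  linarith

end QuadraticBounds

/- `HasGradientAt` presupposes completeness, so the gradient is expressed through `innerSL`. -/
theorem stmt_6_general {E : Type*} [NormedAddCommGroup E] [InnerProductSpace ℝ E]
    (H : E → E → ℝ) (g : E → E → E)
    (hgrad : ∀ θ w, HasFDerivAt (H θ) (innerSL ℝ (g θ w)) w)
    (Fθ Fw L : ℝ) (hFw : 0 < Fw)
    (hLipθ : ∀ θ₁ θ₂ w, ‖g θ₁ w - g θ₂ w‖ ≤ Fθ * ‖θ₁ - θ₂‖)
    (hsc : ∀ θ w₁ w₂, H θ w₁ + ⟪g θ w₁, w₂ - w₁⟫ + Fw / 2 * ‖w₂ - w₁‖ ^ 2 ≤ H θ w₂)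
    (hsm : ∀ θ w₁ w₂, H θ w₂ ≤ H θ w₁ + ⟪g θ w₁, w₂ - w₁⟫ + L / 2 * ‖w₂ - w₁‖ ^ 2)
    (θstar : E) (hfix : g θstar θstar = 0)
    (α : ℝ) (hα : α ≠ 0)
    (θ w w' : E) (hw' : w' = w - α • g θ w) :
    H θ θstar - H θ w ≤
      Fθ ^ 2 / (2 * Fw) * ‖θ - θstar‖ ^ 2 - (1 / α - L / 2) * ‖w' - w‖ ^ 2 := by
  have gradient_at_fixed_point : ‖g θ θstar‖ ≤ Fθ * ‖θ - θstar‖ := by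
    simpa only [hfix, sub_zero] using hLipθ θ θstar θstar
  have target_error : H θ θstar - H θ w' ≤ Fθ ^ 2 / (2 * Fw) * ‖θ - θstar‖ ^ 2 :=
    calc H θ θstar - H θ w' ≤ ‖g θ θstar‖ ^ 2 / (2 * Fw) :=
          sub_le_norm_sq_div_of_quadratic_lower_bound hFw (hsc θ θstar w')
      _ ≤ (Fθ * ‖θ - θstar‖) ^ 2 / (2 * Fw) := by gcongr
      _ = Fθ ^ 2 / (2 * Fw) * ‖θ - θstar‖ ^ 2 := by ring
  have step_decrease : H θ w' - H θ w ≤ -((1 / α - L / 2) * ‖w' - w‖ ^ 2) :=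
    gradient_step_sub_le_of_quadratic_upper_bound hα hw' (hsm θ w w')
  linarith

theorem stmt_6 {E : Type*} [NormedAddCommGroup E] [InnerProductSpace ℝ E]
    [FiniteDimensional ℝ E]
    (H : E → E → ℝ) (g : E → E → E)
    (hgrad : ∀ θ w, HasGradientAt (H θ) (g θ w) w)
    (Fθ Fw L : ℝ) (hFθ : 0 ≤ Fθ) (hFw : 0 < Fw) (hL : 0 < L)
    (hLipθ : ∀ θ₁ θ₂ w, ‖g θ₁ w - g θ₂ w‖ ≤ Fθ * ‖θ₁ - θ₂‖)
    (hsc : ∀ θ w₁ w₂, H θ w₁ + ⟪g θ w₁, w₂ - w₁⟫ + Fw / 2 * ‖w₂ - w₁‖ ^ 2 ≤ H θ w₂)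
    (hsm : ∀ θ w₁ w₂, H θ w₂ ≤ H θ w₁ + ⟪g θ w₁, w₂ - w₁⟫ + L / 2 * ‖w₂ - w₁‖ ^ 2)
    (θstar : E) (hfix : g θstar θstar = 0)
    (α : ℝ) (hα : 0 < α)
    (θ w w' : E) (hw' : w' = w - α • g θ w) :
    H θ θstar - H θ w ≤
      Fθ ^ 2 / (2 * Fw) * ‖θ - θstar‖ ^ 2 - (1 / α - L / 2) * ‖w' - w‖ ^ 2 :=
  stmt_6_general H g (fun θ w => (hgrad θ w).hasFDerivAt) Fθ Fw L hFw hLipθ hsc hsm θstar hfix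
    α hα.ne' θ w w' hw'
end

section
/- Let S and A be finite nonempty types, E a finite-dimensional real inner product space, γ ≥ 0, d : S → ℝ with d(s) ≥ 0, π : S → A → ℝ with π(a|s) ≥ 0 and ∑_a π(a|s) = 1 for each s, and p : S → A → S → ℝ a transition kernel with p(s'|s,a) ≥ 0 and ∑_{s'} p(s'|s,a) = 1. Let q : S → A → E → ℝ and Dq : S → A → E → E be such that for every (s, a) and θ, the map θ' ↦ q s a θ' is Lipschitz with constant L_q(s,a) ≥ 0 and Dq s a w is its gradient at w (so ‖Dq s a w‖ ≤ L_q(s,a) for all w). Define G : E → E → E by G θ w = ∑_s d(s) ∑_a π(a|s) (q s a w − ∑_{s'} p(s'|s,a) (r(s,a,s') + γ · max_{a'} q s' a' θ)) • Dq s a w, for a bounded reward r : S → A → S → ℝ. Then there exists F_θ ≥ 0, namely F_θ = γ · max over the relevant expectations of L_q, such that ‖G θ₁ w − G θ₂ w‖ ≤ F_θ ‖θ₁ − θ₂‖ for all θ₁, θ₂ ∈ E and all w ∈ E; specifically one may take F_θ = γ · ∑_s d(s) ∑_a π(a|s) L_q(s,a) · ∑_{s'} p(s'|s,a) max_{a'}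 L_q(s',a'), which is bounded by γ · max_{s',a'} L_q(s',a')². -/
open Finset

/-
The reward and the value of `w` cancel in `G θ₁ w - G θ₂ w`, which leaves `γ` times a difference of
expected maxima, paired with the gradients at `w`. A maximum is a nonexpansive function of its
entries, so this difference is at most the expected maximum of `Lq` times `‖θ₁ - θ₂‖`; and a
Lipschitz constant bounds the gradient, so each gradient contributes one further factor `Lq s a`,
whatever `w` is.
-/

theorem abs_sup'_sub_sup'_le_sup'_abs {ι α : Type*} [AddCommGroup α] [LinearOrder α]
    [IsOrderedAddMonoid α] {s : Finset ι} (hs : s.Nonempty) (f g : ι → α) :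
    |s.sup' hs f - s.sup' hs g| ≤ s.sup' hs (fun i => |f i - g i|) := by
  have sup'_le_add (f g : ι → α) :
      s.sup' hs f ≤ s.sup' hs (fun i => |f i - g i|) + s.sup' hs g :=
    sup'_le _ _ fun i hi =>
      calc f i ≤ |f i - g i| + g i := sub_le_iff_le_add.mp (le_abs_self _)
        _ ≤ _ := add_le_add (le_sup' (fun i => |f i - g i|) hi) (le_sup' g hi)
  refine abs_sub_le_iff.mpr ⟨sub_le_iff_le_add.mpr (sup'_le_add f g), ?_⟩
  simpa only [abs_sub_comm] using sub_le_iff_le_add.mpr (sup'_le_add g f)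

theorem sum_mul_le_of_forall_le {ι R : Type*} [Semiring R] [PartialOrder R] [IsOrderedRing R]
    {s : Finset ι} {w x : ι → R} {K : R} (hw : ∀ i ∈ s, 0 ≤ w i) (hw1 : ∑ i ∈ s, w i = 1)
    (hx : ∀ i ∈ s, x i ≤ K) : ∑ i ∈ s, w i * x i ≤ K :=
  calc ∑ i ∈ s, w i * x i ≤ ∑ i ∈ s, w i * K :=
        sum_le_sum fun i hi => mul_le_mul_of_nonneg_left (hx i hi) (hw i hi)
    _ = K := by rw [← sum_mul, hw1, one_mul]

theorem norm_le_of_hasGradientAt_of_lip {𝕜 F : Type*} [RCLike 𝕜] [NormedAddCommGroup F]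
    [InnerProductSpace 𝕜 F] [CompleteSpace F] {f : F → 𝕜} {f' x : F} {C : ℝ}
    (hf : HasGradientAt f f' x) (hC : 0 ≤ C)
    (hlip : ∀ᶠ y in nhds x, ‖f y - f x‖ ≤ C * ‖y - x‖) : ‖f'‖ ≤ C := by
  simpa only [LinearIsometryEquiv.norm_map] using hf.hasFDerivAt.le_of_lip' hC hlip

section ExpectedMax

variable {S A : Type*} [Fintype S] [Fintype A] [Nonempty A]

/-- The expectation `E_{s' ∼ μ}[max_{a'} v(s', a')]` of the greedy value of the action values `v`;
the weights `μ` are not required to sum to one. -/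
noncomputable def expectedMax (μ : S → ℝ) (v : S → A → ℝ) : ℝ :=
  ∑ s, μ s * univ.sup' univ_nonempty (v s)

variable {μ : S → ℝ} {v v₁ v₂ : S → A → ℝ}

theorem expectedMax_mono (hμ : ∀ s, 0 ≤ μ s) (h : ∀ s a, v₁ s a ≤ v₂ s a) :
    expectedMax μ v₁ ≤ expectedMax μ v₂ :=
  sum_le_sum fun s _ =>
    mul_le_mul_of_nonneg_left (sup'_mono_fun fun a _ => h s a) (hμ s)

theorem expectedMax_nonneg (hμ : ∀ s, 0 ≤ μ s) (hv : ∀ s a, 0 ≤ v s a) :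
    0 ≤ expectedMax μ v :=
  sum_nonneg fun s _ =>
    mul_nonneg (hμ s) (le_sup'_of_le _ (mem_univ (Classical.arbitrary A)) (hv s _))

theorem expectedMax_le {K : ℝ} (hμ : ∀ s, 0 ≤ μ s) (hμ1 : ∑ s, μ s = 1)
    (hv : ∀ s a, v s a ≤ K) : expectedMax μ v ≤ K :=
  sum_mul_le_of_forall_le (fun s _ => hμ s) hμ1 fun s _ => sup'_le _ _ fun a _ => hv s a

theorem expectedMax_mul_const (μ : S → ℝ) (v : S → A → ℝ) {c : ℝ} (hc : 0 ≤ c) :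
    expectedMax μ (fun s a => v s a * c) = expectedMax μ v * c := by
  simp only [expectedMax, sum_mul, mul_assoc, sup'_mul₀ hc]

theorem abs_expectedMax_sub_le (hμ : ∀ s, 0 ≤ μ s) (v₁ v₂ : S → A → ℝ) :
    |expectedMax μ v₁ - expectedMax μ v₂| ≤ expectedMax μ (fun s a => |v₁ s a - v₂ s a|) := by
  simp only [expectedMax, ← sum_sub_distrib, ← mul_sub]
  refine (abs_sum_le_sum_abs _ _).trans (sum_le_sum fun s _ => ?_)
  rw [abs_mul, abs_of_nonneg (hμ s)]
  exact mul_le_mul_of_nonneg_left (abs_sup'_sub_sup'_le_sup'_abs _ _ _) (hμ s)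

theorem abs_expectedMax_sub_le_mul {L : S → A → ℝ} {c : ℝ} (hμ : ∀ s, 0 ≤ μ s) (hc : 0 ≤ c)
    (h : ∀ s a, |v₁ s a - v₂ s a| ≤ L s a * c) :
    |expectedMax μ v₁ - expectedMax μ v₂| ≤ expectedMax μ L * c :=
  calc |expectedMax μ v₁ - expectedMax μ v₂|
      ≤ expectedMax μ (fun s a => |v₁ s a - v₂ s a|) := abs_expectedMax_sub_le hμ v₁ v₂
    _ ≤ expectedMax μ (fun s a => L s a * c) := expectedMax_mono hμ h
    _ = expectedMax μ L * c := expectedMax_mul_const μ L hc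

end ExpectedMax

section ControlGradient

variable {S A : Type*} [Fintype S] [Fintype A] [Nonempty A]

/-- The Lipschitz constant `F_θ` in the target parameter of the gradient of the control loss, when
`L s a` bounds both the Lipschitz constant and the gradient of `q(s, a, ·)`. -/
noncomputable def targetLipschitzConst (γ : ℝ) (d : S → ℝ) (π : S → A → ℝ) (p : S → A → S → ℝ)
    (L : S → A → ℝ) : ℝ :=
  γ * ∑ s, d s * ∑ a, π s a * L s a * expectedMax (p s a) L

/-- The partial gradient `∇_w H(θ, w)` of the control loss, as a function of the action values
`v = q(·, ·, θ)` at the target parameter, and of the action values `u = q(·, ·, w)` and their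
gradients `Du` at the optimization parameter. -/
noncomputable def controlGradient {E : Type*} [AddCommGroup E] [Module ℝ E] (γ : ℝ)
    (d : S → ℝ) (π : S → A → ℝ) (p r : S → A → S → ℝ) (v u : S → A → ℝ) (Du : S → A → E) : E :=
  ∑ s, ∑ a, (d s * π s a *
    (u s a - ∑ s', p s a s' * (r s a s' + γ * univ.sup' univ_nonempty (v s')))) • Du s a

variable {γ : ℝ} {d : S → ℝ} {π : S → A → ℝ} {p : S → A → S → ℝ} {L : S → A → ℝ}

theorem targetLipschitzConst_nonneg (hγ : 0 ≤ γ) (hd : ∀ s, 0 ≤ d s) (hπ : ∀ s a, 0 ≤ π s a)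
    (hp : ∀ s a s', 0 ≤ p s a s') (hL : ∀ s a, 0 ≤ L s a) :
    0 ≤ targetLipschitzConst γ d π p L :=
  mul_nonneg hγ <| sum_nonneg fun s _ => mul_nonneg (hd s) <| sum_nonneg fun a _ =>
    mul_nonneg (mul_nonneg (hπ s a) (hL s a)) (expectedMax_nonneg (hp s a) hL)

theorem targetLipschitzConst_le_mul_sq {K : ℝ} (hγ : 0 ≤ γ)
    (hd : ∀ s, 0 ≤ d s) (hd1 : ∑ s, d s = 1)
    (hπ : ∀ s a, 0 ≤ π s a) (hπ1 : ∀ s, ∑ a, π s a = 1)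
    (hp : ∀ s a s', 0 ≤ p s a s') (hp1 : ∀ s a, ∑ s', p s a s' = 1)
    (hL : ∀ s a, 0 ≤ L s a) (hLK : ∀ s a, L s a ≤ K) :
    targetLipschitzConst γ d π p L ≤ γ * K ^ 2 := by
  have mul_expectedMax_le (s : S) (a : A) : L s a * expectedMax (p s a) L ≤ K ^ 2 := by
    rw [sq]
    exact mul_le_mul (hLK s a) (expectedMax_le (hp s a) (hp1 s a) hLK)
      (expectedMax_nonneg (hp s a) hL) ((hL s a).trans (hLK s a))
  simp only [targetLipschitzConst, mul_assoc]
  exact mul_le_mul_of_nonneg_left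
    (sum_mul_le_of_forall_le (fun s _ => hd s) hd1 fun s _ =>
      sum_mul_le_of_forall_le (fun a _ => hπ s a) (hπ1 s) fun a _ => mul_expectedMax_le s a) hγ

theorem controlGradient_sub {E : Type*} [AddCommGroup E] [Module ℝ E] (γ : ℝ) (d : S → ℝ)
    (π : S → A → ℝ) (p r : S → A → S → ℝ) (v₁ v₂ u : S → A → ℝ) (Du : S → A → E) :
    controlGradient γ d π p r v₁ u Du - controlGradient γ d π p r v₂ u Du =
      ∑ s, ∑ a, (d s * π s a * (γ * (expectedMax (p s a) v₂ - expectedMax (p s a) v₁))) •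
        Du s a := by
  have backup_eq (v : S → A → ℝ) (s : S) (a : A) :
      ∑ s', p s a s' * (r s a s' + γ * univ.sup' univ_nonempty (v s')) =
        ∑ s', p s a s' * r s a s' + γ * expectedMax (p s a) v := by
    simp only [expectedMax, mul_add, sum_add_distrib, mul_sum, mul_left_comm]
  simp only [controlGradient, ← sum_sub_distrib, ← sub_smul, backup_eq]
  refine sum_congr rfl fun s _ => sum_congr rfl fun a _ => ?_
  congr 1
  ring

theorem norm_controlGradient_sub_le {E : Type*} [SeminormedAddCommGroup E] [NormedSpace ℝ E]
    {v₁ v₂ : S → A → ℝ} {Du : S → A → E} {c : ℝ} (hγ : 0 ≤ γ) (hd : ∀ s, 0 ≤ d s)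
    (hπ : ∀ s a, 0 ≤ π s a) (hp : ∀ s a s', 0 ≤ p s a s') (hc : 0 ≤ c)
    (hv : ∀ s a, |v₁ s a - v₂ s a| ≤ L s a * c) (hDu : ∀ s a, ‖Du s a‖ ≤ L s a)
    (r : S → A → S → ℝ) (u : S → A → ℝ) :
    ‖controlGradient γ d π p r v₁ u Du - controlGradient γ d π p r v₂ u Du‖ ≤
      targetLipschitzConst γ d π p L * c := by
  have norm_summand_le (s : S) (a : A) :
      ‖(d s * π s a * (γ * (expectedMax (p s a) v₂ - expectedMax (p s a) v₁))) • Du s a‖ ≤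
        d s * π s a * (γ * (expectedMax (p s a) L * c)) * L s a := by
    have hdπ : 0 ≤ d s * π s a := mul_nonneg (hd s) (hπ s a)
    have hmax := abs_expectedMax_sub_le_mul (hp s a) hc hv
    have hmax_nonneg := (abs_nonneg _).trans hmax
    rw [norm_smul, Real.norm_eq_abs, abs_mul, abs_mul γ, abs_of_nonneg hdπ, abs_of_nonneg hγ,
      abs_sub_comm]
    gcongr
    exact hDu s a
  calc ‖controlGradient γ d π p r v₁ u Du - controlGradient γ d π p r v₂ u Du‖
      ≤ ∑ s, ∑ a, d s * π s a * (γ * (expectedMax (p s a) L * c)) * L s a := by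
        rw [controlGradient_sub]
        exact norm_sum_le_of_le _ fun s _ => norm_sum_le_of_le _ fun a _ => norm_summand_le s a
    _ = targetLipschitzConst γ d π p L * c := by
        simp only [targetLipschitzConst, mul_sum, sum_mul]
        exact sum_congr rfl fun s _ => sum_congr rfl fun a _ => by ring

end ControlGradient

theorem stmt_17_general {S A : Type*} [Fintype S] [Fintype A] [Nonempty S] [Nonempty A]
    {E : Type*} [NormedAddCommGroup E] [InnerProductSpace ℝ E] [CompleteSpace E]
    (γ : ℝ) (hγ : 0 ≤ γ)
    (d : S → ℝ) (hd : ∀ s, 0 ≤ d s) (hd1 : ∑ s, d s = 1)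
    (π : S → A → ℝ) (hπ : ∀ s a, 0 ≤ π s a) (hπ1 : ∀ s, ∑ a, π s a = 1)
    (p : S → A → S → ℝ) (hp : ∀ s a s', 0 ≤ p s a s') (hp1 : ∀ s a, ∑ s', p s a s' = 1)
    (r : S → A → S → ℝ)
    (q : S → A → E → ℝ) (Dq : S → A → E → E) (Lq : S → A → ℝ)
    (hLq : ∀ s a, 0 ≤ Lq s a)
    (hqLip : ∀ s a θ₁ θ₂, |q s a θ₁ - q s a θ₂| ≤ Lq s a * ‖θ₁ - θ₂‖)
    (hqgrad : ∀ s a w, HasGradientAt (q s a) (Dq s a w) w)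
    (G : E → E → E)
    (hG : ∀ θ w, G θ w =
      ∑ s, ∑ a,
        (d s * π s a *
          (q s a w -
            ∑ s', p s a s' *
              (r s a s' + γ * univ.sup' univ_nonempty (fun a' => q s' a' θ)))) •
          Dq s a w) :
    ∃ Fθ : ℝ, 0 ≤ Fθ ∧
      Fθ = γ * ∑ s, d s * ∑ a, π s a * Lq s a *
        ∑ s', p s a s' * univ.sup' univ_nonempty (fun a' => Lq s' a') ∧
      (∀ θ₁ θ₂ w : E, ‖G θ₁ w - G θ₂ w‖ ≤ Fθ * ‖θ₁ - θ₂‖) ∧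
      Fθ ≤ γ * (univ.sup' univ_nonempty (fun sa : S × A => Lq sa.1 sa.2)) ^ 2 := by
  have norm_Dq_le (w : E) (s : S) (a : A) : ‖Dq s a w‖ ≤ Lq s a :=
    norm_le_of_hasGradientAt_of_lip (hqgrad s a w) (hLq s a)
      (.of_forall fun θ => hqLip s a θ w)
  refine ⟨targetLipschitzConst γ d π p Lq, targetLipschitzConst_nonneg hγ hd hπ hp hLq, rfl,
    fun θ₁ θ₂ w => ?_,
    targetLipschitzConst_le_mul_sq hγ hd hd1 hπ hπ1 hp hp1 hLq fun s a =>
      le_sup' (fun sa : S × A => Lq sa.1 sa.2) (mem_univ (s, a))⟩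
  rw [hG, hG]
  exact norm_controlGradient_sub_le hγ hd hπ hp (norm_nonneg _)
    (fun s a => hqLip s a θ₁ θ₂) (norm_Dq_le w) r (fun s a => q s a w)

theorem stmt_17 {S A : Type*} [Fintype S] [Fintype A] [Nonempty S] [Nonempty A]
    {E : Type*} [NormedAddCommGroup E] [InnerProductSpace ℝ E] [FiniteDimensional ℝ E]
    (γ : ℝ) (hγ : 0 ≤ γ)
    (d : S → ℝ) (hd : ∀ s, 0 ≤ d s) (hd1 : ∑ s, d s = 1)
    (π : S → A → ℝ) (hπ : ∀ s a, 0 ≤ π s a) (hπ1 : ∀ s, ∑ a, π s a = 1)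
    (p : S → A → S → ℝ) (hp : ∀ s a s', 0 ≤ p s a s') (hp1 : ∀ s a, ∑ s', p s a s' = 1)
    (r : S → A → S → ℝ) (hr : ∃ B : ℝ, ∀ s a s', |r s a s'| ≤ B)
    (q : S → A → E → ℝ) (Dq : S → A → E → E) (Lq : S → A → ℝ)
    (hLq : ∀ s a, 0 ≤ Lq s a)
    (hqLip : ∀ s a θ₁ θ₂, |q s a θ₁ - q s a θ₂| ≤ Lq s a * ‖θ₁ - θ₂‖)
    (hqgrad : ∀ s a w, HasGradientAt (q s a) (Dq s a w) w)
    (hDqB : ∀ s a w, ‖Dq s a w‖ ≤ Lq s a)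
    (G : E → E → E)
    (hG : ∀ θ w, G θ w =
      ∑ s, ∑ a,
        (d s * π s a *
          (q s a w -
            ∑ s', p s a s' *
              (r s a s' + γ * univ.sup' univ_nonempty (fun a' => q s' a' θ)))) •
          Dq s a w) :
    ∃ Fθ : ℝ, 0 ≤ Fθ ∧
      Fθ = γ * ∑ s, d s * ∑ a, π s a * Lq s a *
        ∑ s', p s a s' * univ.sup' univ_nonempty (fun a' => Lq s' a') ∧
      (∀ θ₁ θ₂ w : E, ‖G θ₁ w - G θ₂ w‖ ≤ Fθ * ‖θ₁ - θ₂‖) ∧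
      Fθ ≤ γ * (univ.sup' univ_nonempty (fun sa : S × A => Lq sa.1 sa.2)) ^ 2 := by
  exact stmt_17_general γ hγ d hd hd1 π hπ hπ1 p hp hp1 r q Dq Lq hLq hqLip hqgrad G hG
end
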